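/- Let K be a field and n ≥ 3. Let H_1 and H_2 be linear hyperplanes of M_n(K). Then every matrix A ∈ M_n(K) splits as A = BC for some B ∈ H_1 and C ∈ H_2. -/

import Mathlib

/-!
Every linear form on matrices is `B ↦ trace (P * B)`, so the task is to write `A = B * C` with
`trace (P * B) = trace (Q * C) = 0`, where `Q ≠ 0` without loss of generality.

If `A` is invertible, we may take `A = 1`. Multiplying by invertible matrices makes `P` diagonal
while some diagonal entry of `Q` is nonzero. The permutation matrix of a full cycle and its inverse
have zero diagonal, so they are orthogonal to `P`; since the cycle has length at least three, they
can be multiplied by a transvection that keeps the orthogonality to `P` and, thanks to the nonzero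
diagonal entry, achieves the orthogonality to `Q`.

If `A` is singular, we may assume that its `i`-th row vanishes, where the `i`-th column of `Q` is
nonzero. Then `A` factors through the space obtained by deleting the `i`-th coordinate, whose
dimension is at least two; inserting there an invertible matrix and its inverse yields `B` with
`trace (P * B) = 0` and zero `i`-th column. The `i`-th row of `C` is then free and is used to
obtain `trace (Q * C) = 0`.
-/

open Matrix Module
open scoped MatrixGroups

section CommRing

variable {ι κ R : Type*} [Fintype ι] [CommRing R]

theorem exists_forall_eq_trace_mul (φ : Dual R (Matrix ι ι R)) :
    ∃ P : Matrix ι ι R, ∀ B, φ B = (P * B).trace := by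
  classical
  let P : Matrix ι ι R := .of fun j i => φ (single i j 1)
  have hφ : φ = traceLinearMap ι R R ∘ₗ LinearMap.mulLeft R P := by
    refine ext_linearMap R fun i j => LinearMap.ext_ring ?_
    simp [P, trace_mul_single]
  exact ⟨P, LinearMap.congr_fun hφ⟩

theorem trace_mul_mul_mul_cycle (P X T Y : Matrix ι ι R) :
    (P * (X * T * Y)).trace = (Y * P * X * T).trace := by
  rw [← mul_assoc, trace_mul_comm]
  simp only [mul_assoc]

variable [DecidableEq ι]

theorem trace_mul_transvection (M : Matrix ι ι R) (i j : ι) (c : R) :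
    (M * transvection i j c).trace = M.trace + c * M j i := by
  simp [transvection, mul_add, trace_mul_single, mul_comm]

theorem trace_diagonal_mul_permMatrix {σ : Equiv.Perm ι} (hσ : ∀ i, σ i ≠ i) (d : ι → R) :
    (diagonal d * σ.permMatrix R).trace = 0 :=
  Finset.sum_eq_zero fun i _ => by simp [PEquiv.toMatrix_apply, hσ i]

/-- The matrix `transvection i j c` as an element of the general linear group, so that `⁻¹` supplies
its inverse when it is used as a factor of an invertible matrix. -/
def transvectionGL {i j : ι} (hij : i ≠ j) (c : R) : GL ι R where
  val := transvection i j c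
  inv := transvection i j (-c)
  val_inv := by simp [transvection_mul_transvection_same, hij]
  inv_val := by simp [transvection_mul_transvection_same, hij]

theorem transvection_mul_diagonal {i j : ι} {d : ι → R} {s t : R} (hst : d i * s = t * d j) :
    transvection i j t * diagonal d = diagonal d * transvection i j s := by
  rw [transvection, transvection, add_mul, mul_add, one_mul, mul_one]
  congr 1
  ext a b
  by_cases h : i = a ∧ j = b
  · obtain ⟨rfl, rfl⟩ := h
    simp [hst]
  · simp [h]

/-- The permutation matrix of `σ` as an element of the general linear group, so that `⁻¹` supplies
its inverse. With Mathlib's convention `σ ↦ σ.permMatrix R` is an antihomomorphism. -/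
def permMatrixGL (σ : Equiv.Perm ι) : GL ι R where
  val := σ.permMatrix R
  inv := σ⁻¹.permMatrix R
  val_inv := by rw [← permMatrix_mul, inv_mul_cancel, permMatrix_one]
  inv_val := by rw [← permMatrix_mul, mul_inv_cancel, permMatrix_one]

theorem one_submatrix_mul_one_submatrix [DecidableEq κ] {f : κ → ι} (hf : f.Injective) :
    (1 : Matrix ι ι R).submatrix f id * (1 : Matrix ι ι R).submatrix id f = 1 := by
  ext a b
  simp [mul_apply, one_apply, hf.eq_iff]

theorem one_submatrix_mul_submatrix_of_row_eq_zero {A : Matrix ι κ R} {i : ι}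
    (hA : ∀ b, A i b = 0) :
    (1 : Matrix ι ι R).submatrix id ((↑) : {x // x ≠ i} → ι) * A.submatrix (↑) id = A := by
  ext a b
  calc ∑ x : {x // x ≠ i}, (1 : Matrix ι ι R) a x * A x b
      = ∑ x, (1 : Matrix ι ι R) a x * A x b := by
        rw [Fintype.sum_eq_add_sum_subtype_ne _ i, hA, mul_zero, zero_add]
    _ = A a b := by rw [← mul_apply, Matrix.one_mul]

end CommRing

theorem exists_perm_pow_apply_ne {ι : Type*} [Fintype ι] :
    ∃ σ : Equiv.Perm ι, ∀ i m, 0 < m → m < Fintype.card ι → (σ ^ m) i ≠ i := by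
  classical
  obtain ⟨σ, hσ, -⟩ := (Finset.univ : Finset ι).exists_cycleOn
  exact ⟨σ, fun i m hm hmι h => Nat.not_dvd_of_pos_of_lt hm hmι <|
    (hσ.pow_apply_eq (Finset.mem_univ i)).1 h⟩

section Field

variable {ι K : Type*} [Fintype ι] [Field K]

theorem exists_forall_trace_mul_eq_zero_imp_mem {H : Submodule K (Matrix ι ι K)}
    (hH : Fintype.card ι ^ 2 ≤ finrank K H + 1) :
    ∃ P : Matrix ι ι K, ∀ B, (P * B).trace = 0 → B ∈ H := by
  obtain rfl | hlt := eq_or_lt_of_le (le_top : H ≤ ⊤)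
  · exact ⟨0, fun _ _ => Submodule.mem_top⟩
  obtain ⟨φ, hφ, hHφ⟩ := Submodule.exists_le_ker_of_lt_top H hlt
  have hker : H = LinearMap.ker φ := by
    refine Submodule.eq_of_le_of_finrank_le hHφ ?_
    have hdim := Dual.finrank_ker_add_one_of_ne_zero hφ
    rw [finrank_matrix, finrank_self, mul_one, ← sq] at hdim
    lia
  obtain ⟨P, hP⟩ := exists_forall_eq_trace_mul φ
  exact ⟨P, fun B hB => by rw [hker, LinearMap.mem_ker, hP, hB]⟩

theorem exists_mul_mul_eq_diagonal [DecidableEq ι] (P : Matrix ι ι K) :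
    ∃ (U V : GL ι K) (d : ι → K), U.1 * P * V.1 = diagonal d := by
  have hunit (L : List (TransvectionStruct ι K)) :
      IsUnit (L.map TransvectionStruct.toMatrix).prod := by
    rw [isUnit_iff_isUnit_det, TransvectionStruct.det_toMatrix_prod]
    exact isUnit_one
  obtain ⟨L, L', d, h⟩ := Pivot.exists_list_transvec_mul_mul_list_transvec_eq_diagonal P
  exact ⟨(hunit L).unit, (hunit L').unit, d, h⟩

theorem exists_trace_mul_eq_zero [DecidableEq ι] (hι : 2 ≤ Fintype.card ι) (P : Matrix ι ι K) :
    ∃ T : GL ι K, (P * T.1).trace = 0 := by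
  obtain ⟨U, V, d, hd⟩ := exists_mul_mul_eq_diagonal P
  obtain ⟨σ, hσ⟩ := exists_perm_pow_apply_ne (ι := ι)
  refine ⟨V * permMatrixGL σ * U, ?_⟩
  rw [Units.val_mul, Units.val_mul, trace_mul_mul_mul_cycle, hd]
  exact trace_diagonal_mul_permMatrix (fun i => hσ i 1 (by lia) (by lia)) d

theorem exists_mul_diagonal_mul_eq_diagonal_apply_ne_zero [DecidableEq ι] (d : ι → K)
    {Q : Matrix ι ι K} (hQ : Q ≠ 0) :
    ∃ U V : GL ι K, U.1 * diagonal d * V.1 = diagonal d ∧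
      ∃ k, ((V⁻¹).1 * Q * (U⁻¹).1) k k ≠ 0 := by
  by_cases! hdiag : ∃ k, Q k k ≠ 0
  · exact ⟨1, 1, by simpa using hdiag⟩
  obtain ⟨j, i, hji⟩ : ∃ j i, Q j i ≠ 0 := by
    by_contra! h
    exact hQ (Matrix.ext h)
  have hij : i ≠ j := by
    rintro rfl
    exact hji (hdiag i)
  obtain ⟨s, t, hst, hd⟩ : ∃ s t : K, (s ≠ 0 ∨ t ≠ 0) ∧ d i * s = t * d j := by
    by_cases h : d i = 0
    · exact ⟨1, 0, by simp, by simp [h]⟩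
    · exact ⟨d j, d i, Or.inr h, rfl⟩
  refine ⟨transvectionGL hij t, (transvectionGL hij s)⁻¹, ?_, ?_⟩
  · exact (Units.mul_inv_eq_iff_eq_mul _).2 (transvection_mul_diagonal hd)
  rcases hst with hs | ht
  · refine ⟨i, ?_⟩
    simp [transvectionGL, hdiag, hij, hs, hji]
  · refine ⟨j, ?_⟩
    simp [transvectionGL, hdiag, hij.symm, ht, hji]

theorem exists_trace_diagonal_mul_eq_zero_trace_mul_inv_eq_zero [DecidableEq ι]
    (hι : 3 ≤ Fintype.card ι) (d : ι → K) {Q : Matrix ι ι K} {k : ι} (hk : Q k k ≠ 0) :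
    ∃ T : GL ι K, (diagonal d * T.1).trace = 0 ∧ (Q * (T⁻¹).1).trace = 0 := by
  obtain ⟨σ, hσ⟩ := exists_perm_pow_apply_ne (ι := ι)
  have hσ₁ (i : ι) : σ i ≠ i := hσ i 1 (by lia) (by lia)
  have hσ₂ (i : ι) : σ (σ i) ≠ i := hσ i 2 (by lia) (by lia)
  let c := -(σ⁻¹.permMatrix K * Q).trace / Q k k
  refine ⟨permMatrixGL σ * (transvectionGL (hσ₁ k).symm c)⁻¹, ?_, ?_⟩
  · have hentry : (diagonal d * σ.permMatrix K) (σ k) k = 0 := by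
      simp [PEquiv.toMatrix_apply, hσ₂]
    calc (diagonal d * (σ.permMatrix K * transvection k (σ k) (-c))).trace
        = (diagonal d * σ.permMatrix K).trace + -c * (diagonal d * σ.permMatrix K) (σ k) k := by
          rw [← mul_assoc, trace_mul_transvection]
      _ = 0 := by rw [trace_diagonal_mul_permMatrix hσ₁, hentry, mul_zero, add_zero]
  · have hentry : (σ⁻¹.permMatrix K * Q) (σ k) k = Q k k := by
      simp [PEquiv.toMatrix_toPEquiv_mul]
    rw [_root_.mul_inv_rev, inv_inv]
    calc (Q * (transvection k (σ k) c * σ⁻¹.permMatrix K)).trace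
        = (σ⁻¹.permMatrix K * Q).trace + c * (σ⁻¹.permMatrix K * Q) (σ k) k := by
          rw [← mul_assoc, trace_mul_comm, ← mul_assoc, trace_mul_transvection]
      _ = 0 := by rw [hentry, div_mul_cancel₀ _ hk, add_neg_cancel]

theorem exists_trace_mul_eq_zero_trace_mul_inv_eq_zero [DecidableEq ι] (hι : 3 ≤ Fintype.card ι)
    (P : Matrix ι ι K) {Q : Matrix ι ι K} (hQ : Q ≠ 0) :
    ∃ T : GL ι K, (P * T.1).trace = 0 ∧ (Q * (T⁻¹).1).trace = 0 := by
  obtain ⟨U, V, d, hd⟩ := exists_mul_mul_eq_diagonal P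
  have hQ' : (V⁻¹).1 * Q * (U⁻¹).1 ≠ 0 := by
    rwa [Ne, Units.mul_left_eq_zero, Units.mul_right_eq_zero]
  obtain ⟨U', V', hd', k, hk⟩ := exists_mul_diagonal_mul_eq_diagonal_apply_ne_zero d hQ'
  obtain ⟨T, hPT, hQT⟩ := exists_trace_diagonal_mul_eq_zero_trace_mul_inv_eq_zero hι d hk
  refine ⟨V * V' * T * (U' * U), ?_, ?_⟩
  · rw [← hPT, ← hd', ← hd, Units.val_mul, Units.val_mul, trace_mul_mul_mul_cycle]
    simp only [Units.val_mul, mul_assoc]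
  · rw [← hQT, _root_.mul_inv_rev, _root_.mul_inv_rev _ T, ← mul_assoc, Units.val_mul,
      Units.val_mul, trace_mul_mul_mul_cycle]
    simp only [_root_.mul_inv_rev, Units.val_mul, mul_assoc]

theorem exists_mul_row_eq_zero [DecidableEq ι] {A : Matrix ι ι K} (hA : ¬ IsUnit A) (i : ι) :
    ∃ U : GL ι K, ∀ b, (U.1 * A) i b = 0 := by
  obtain ⟨U, V, d, hd⟩ := exists_mul_mul_eq_diagonal A
  obtain ⟨k, hk⟩ : ∃ k, d k = 0 := by
    by_contra! h
    have hunit : IsUnit (U.1 * A * V.1) := by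
      rw [hd, isUnit_diagonal, Pi.isUnit_iff]
      exact fun i => (h i).isUnit
    exact hA (by simpa using hunit)
  have hUA : U.1 * A = diagonal d * (V⁻¹).1 := (Units.eq_mul_inv_iff_mul_eq V).2 hd
  exact ⟨GeneralLinearGroup.swap K i k * U, fun b => by
    simp [GeneralLinearGroup.swap, mul_assoc, hUA, hk]⟩

theorem exists_eq_mul_of_row_eq_zero (hι : 3 ≤ Fintype.card ι) (P : Matrix ι ι K)
    {Q A : Matrix ι ι K} {i j : ι} (hA : ∀ b, A i b = 0) (hQ : Q j i ≠ 0) :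
    ∃ B C, A = B * C ∧ (P * B).trace = 0 ∧ (Q * C).trace = 0 := by
  classical
  let E : Matrix ι {x // x ≠ i} K := (1 : Matrix ι ι K).submatrix id Subtype.val
  let E' : Matrix {x // x ≠ i} ι K := (1 : Matrix ι ι K).submatrix Subtype.val id
  let A' : Matrix {x // x ≠ i} ι K := A.submatrix Subtype.val id
  have hE : E' * E = 1 := one_submatrix_mul_one_submatrix Subtype.val_injective
  have hEA : E * A' = A := one_submatrix_mul_submatrix_of_row_eq_zero hA
  have hcard : 2 ≤ Fintype.card {x // x ≠ i} := by
    rw [Fintype.card_subtype_compl, Fintype.card_subtype_eq]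
    lia
  obtain ⟨T, hT⟩ := exists_trace_mul_eq_zero hcard (E' * P * E)
  let B := E * T.1 * E'
  let N := E * (T⁻¹).1 * A'
  let a := -(Q * N).trace / Q j i
  have hBN : B * N = A := by
    calc B * N = E * (T.1 * (E' * E) * (T⁻¹).1) * A' := by simp only [B, N, Matrix.mul_assoc]
      _ = A := by rw [hE, Matrix.mul_one, Units.mul_inv, Matrix.mul_one, hEA]
  have hE' : E' * single i j a = 0 := by
    ext x b
    simp [E', mul_apply, one_apply, single_apply_of_row_ne x.2.symm]
  refine ⟨B, N + single i j a, ?_, ?_, ?_⟩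
  · rw [Matrix.mul_add, hBN, Matrix.mul_assoc _ E', hE', Matrix.mul_zero, add_zero]
  · rw [← Matrix.mul_assoc, trace_mul_comm, ← Matrix.mul_assoc, ← Matrix.mul_assoc, hT]
  · rw [Matrix.mul_add, trace_add, trace_mul_single, op_smul_eq_mul, mul_div_cancel₀ _ hQ,
      add_neg_cancel]

theorem exists_eq_mul_of_isUnit [DecidableEq ι] (hι : 3 ≤ Fintype.card ι) (P : Matrix ι ι K)
    {Q A : Matrix ι ι K} (hQ : Q ≠ 0) (hA : IsUnit A) :
    ∃ B C, A = B * C ∧ (P * B).trace = 0 ∧ (Q * C).trace = 0 := by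
  have hAQ : A * Q ≠ 0 := by rwa [Ne, hA.mul_right_eq_zero]
  obtain ⟨T, hP, hQ⟩ := exists_trace_mul_eq_zero_trace_mul_inv_eq_zero hι P hAQ
  refine ⟨T.1, (T⁻¹).1 * A, ?_, hP, ?_⟩
  · rw [Units.mul_inv_cancel_left]
  · rw [← mul_assoc, trace_mul_comm, ← mul_assoc, hQ]

theorem exists_eq_mul_of_not_isUnit [DecidableEq ι] (hι : 3 ≤ Fintype.card ι) (P : Matrix ι ι K)
    {Q A : Matrix ι ι K} (hQ : Q ≠ 0) (hA : ¬ IsUnit A) :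
    ∃ B C, A = B * C ∧ (P * B).trace = 0 ∧ (Q * C).trace = 0 := by
  obtain ⟨j, i, hji⟩ : ∃ j i, Q j i ≠ 0 := by
    by_contra! h
    exact hQ (Matrix.ext h)
  obtain ⟨U, hU⟩ := exists_mul_row_eq_zero hA i
  obtain ⟨B, C, hBC, hB, hC⟩ := exists_eq_mul_of_row_eq_zero hι (P * (U⁻¹).1) hU hji
  refine ⟨(U⁻¹).1 * B, C, ?_, ?_, hC⟩
  · rw [mul_assoc, ← hBC, Units.inv_mul_cancel_left]
  · rw [← mul_assoc, hB]

theorem exists_eq_mul_trace_mul_eq_zero (hι : 3 ≤ Fintype.card ι) (P Q A : Matrix ι ι K) :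
    ∃ B C, A = B * C ∧ (P * B).trace = 0 ∧ (Q * C).trace = 0 := by
  classical
  wlog hQ : Q ≠ 0 generalizing Q
  · have hne : Nonempty ι := Fintype.card_pos_iff.1 (by lia)
    obtain ⟨B, C, hBC, hB, -⟩ := this 1 one_ne_zero
    exact ⟨B, C, hBC, hB, by simp [not_not.1 hQ]⟩
  by_cases hA : IsUnit A
  · exact exists_eq_mul_of_isUnit hι P hQ hA
  · exact exists_eq_mul_of_not_isUnit hι P hQ hA

end Field

theorem two_hyperplanes_product_general {ι K : Type*} [Fintype ι] [Field K]
    (hι : 3 ≤ Fintype.card ι) (H₁ H₂ : Submodule K (Matrix ι ι K))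
    (hH₁ : Fintype.card ι ^ 2 ≤ finrank K H₁ + 1) (hH₂ : Fintype.card ι ^ 2 ≤ finrank K H₂ + 1)
    (A : Matrix ι ι K) :
    ∃ B ∈ H₁, ∃ C ∈ H₂, A = B * C := by
  obtain ⟨P, hP⟩ := exists_forall_trace_mul_eq_zero_imp_mem hH₁
  obtain ⟨Q, hQ⟩ := exists_forall_trace_mul_eq_zero_imp_mem hH₂
  obtain ⟨B, C, hBC, hB, hC⟩ := exists_eq_mul_trace_mul_eq_zero hι P Q A
  exact ⟨B, hP B hB, C, hQ C hC, hBC⟩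

theorem two_hyperplanes_product (K : Type*) [Field K] (n : ℕ) (hn : 3 ≤ n)
    (H₁ H₂ : Submodule K (Matrix (Fin n) (Fin n) K))
    (hH₁ : Module.finrank K H₁ = n ^ 2 - 1) (hH₂ : Module.finrank K H₂ = n ^ 2 - 1)
    (A : Matrix (Fin n) (Fin n) K) :
    ∃ B ∈ H₁, ∃ C ∈ H₂, A = B * C :=
  two_hyperplanes_product_general (by simpa) H₁ H₂ (by rw [Fintype.card_fin]; lia)
    (by rw [Fintype.card_fin]; lia) A
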